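/- Let G_{n,d} be the configuration-model random d-regular multigraph on n vertices and let Z_{i,j} be the number of vertex subsets S with |S| = i such that the induced subgraph G_{n,d}[S] has exactly j edges. Then for all 1 ≤ i ≤ n and 0 ≤ j ≤ (d/2)·i (with corresponding factorial arguments nonnegative integers), E[Z_{i,j}] = C(n, i) · (i d)! · ((n − i) d)! · (nd/2)! · 2^{i d − 2j} / [ (i d − 2j)! · j! · (nd/2 − i d + j)! · (nd)! ]. -/

import Mathlib

/-!
The configuration model; exact formula for `E[Z_{i,j}]`, the expected number of vertex
subsets of size `i` inducing exactly `j` edges.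
-/

open scoped Classical

noncomputable section

/-- The set of pairings (perfect matchings of the `n*d` half-edges) in the configuration
model for a `d`-regular multigraph on `n` vertices. -/
def pairings (n d : ℕ) : Finset ((Fin n × Fin d) ≃ (Fin n × Fin d)) :=
  Finset.univ.filter fun M => (∀ x, M (M x) = x) ∧ ∀ x, M x ≠ x

/-- The number of edges (loops and parallel edges counted) of the sub-multigraph induced on
`S` by the configuration-model multigraph of the pairing `M`. -/
def edgesWithin {n d : ℕ} (M : (Fin n × Fin d) ≃ (Fin n × Fin d)) (S : Finset (Fin n)) : ℕ :=
  (Finset.univ.filter fun h : Fin n × Fin d => h.1 ∈ S ∧ (M h).1 ∈ S).card / 2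

/-- `Z_{i,j}`: the number of vertex subsets `S` with `|S| = i` inducing exactly `j` edges. -/
def Zcount (n d i j : ℕ) (M : (Fin n × Fin d) ≃ (Fin n × Fin d)) : ℕ :=
  (Finset.univ.filter fun S : Finset (Fin n) => S.card = i ∧ edgesWithin M S = j).card

/-- The expectation of `Z_{i,j}` under the uniform distribution on pairings. -/
def EZ (n d i j : ℕ) : ℝ :=
  (∑ M ∈ pairings n d, (Zcount n d i j M : ℝ)) / ((pairings n d).card : ℝ)

/-!
By symmetry, the probability that a uniform pairing of `2 * m` points has exactly `j` pairs inside a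
set `T` depends only on `#T`. It is therefore equal to the fraction of the sets of that size which
contain exactly `j` pairs of one fixed pairing: such a set of size `2 * j + k` is given by the `j`
pairs it contains, the `k` pairs it meets in one point, and a point of each of the latter. Taking
for `T` the half-edges at `i` vertices and summing over the `n.choose i` sets of vertices yields
`E[Z_{i,j}]` by linearity of expectation.
-/

open Finset Equiv

section Pairing

variable {α β : Type*}

/-- A perfect matching of `α`, encoded as the permutation exchanging the two points of each pair. -/
structure IsPairing (M : Perm α) : Prop where
  involutive : Function.Involutive M
  apply_ne : ∀ x, M x ≠ x

lemma IsPairing.permCongr {M : Perm α} (hM : IsPairing M) (e : α ≃ β) :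
    IsPairing (e.permCongr M) where
  involutive x := by simp [hM.involutive (e.symm x)]
  apply_ne x h := hM.apply_ne (e.symm x) ((Equiv.eq_symm_apply e).2 h)

lemma isPairing_permCongr_iff (e : α ≃ β) {M : Perm α} :
    IsPairing (e.permCongr M) ↔ IsPairing M := by
  refine ⟨fun h ↦ ?_, fun h ↦ h.permCongr e⟩
  rw [← e.permCongr.symm_apply_apply M]
  exact h.permCongr e.symm

lemma isPairing_sumComm (ι : Type*) : IsPairing (Equiv.sumComm ι ι) where
  involutive := Sum.swap_swap
  apply_ne x := by cases x <;> simp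

lemma IsPairing.cycleType_eq [Fintype α] [DecidableEq α] {M : Perm α} (hM : IsPairing M) :
    M.cycleType = Multiset.replicate (Fintype.card α / 2) 2 := by
  have cycleType_eq_replicate : M.cycleType = Multiset.replicate M.cycleType.card 2 :=
    Perm.cycleType_of_pow_prime_eq_one (by ext x; simp [pow_two, hM.involutive x])
  have support_eq_univ : M.support = univ := by ext x; simp [hM.apply_ne x]
  have two_mul_card : M.cycleType.card * 2 = Fintype.card α := by
    rw [← card_univ, ← support_eq_univ, ← M.sum_cycleType, cycleType_eq_replicate]
    simp
  rw [cycleType_eq_replicate, ← two_mul_card, Nat.mul_div_cancel _ two_pos]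

lemma IsPairing.exists_permCongr_eq [Fintype α] [Fintype β] {M : Perm α} {N : Perm β}
    (hM : IsPairing M) (hN : IsPairing N) (hcard : Fintype.card α = Fintype.card β) :
    ∃ e : α ≃ β, e.permCongr M = N := by
  let e := Fintype.equivOfCardEq hcard
  have conj : IsConj (e.permCongr M) N := by
    rw [Perm.isConj_iff_cycleType_eq, (hM.permCongr e).cycleType_eq, hN.cycleType_eq]
  obtain ⟨c, rfl⟩ := isConj_iff.1 conj
  exact ⟨e.trans c, by ext x; simp [Perm.inv_def]⟩

/-- The number of pairs of the pairing `M` with both points in `T`; each of them accounts for two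
points `x` of `T`, whence the division. -/
def pairsWithin [DecidableEq α] (M : Perm α) (T : Finset α) : ℕ :=
  #{x ∈ T | M x ∈ T} / 2

variable [DecidableEq α] [DecidableEq β]

lemma pairsWithin_permCongr (e : α ≃ β) (M : Perm α) (T : Finset α) :
    pairsWithin (e.permCongr M) (T.map e.toEmbedding) = pairsWithin M T := by
  have : ({x ∈ T.map e.toEmbedding | e.permCongr M x ∈ T.map e.toEmbedding} : Finset β) =
      {x ∈ T | M x ∈ T}.map e.toEmbedding := by
    ext x; simp
  rw [pairsWithin, this, card_map, pairsWithin]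

lemma pairsWithin_sumComm_disjSum {ι : Type*} [DecidableEq ι] (A B : Finset ι) :
    pairsWithin (Equiv.sumComm ι ι) (A.disjSum B) = #(A ∩ B) := by
  have : ({x ∈ A.disjSum B | Equiv.sumComm ι ι x ∈ A.disjSum B} : Finset (ι ⊕ ι)) =
      (A ∩ B).disjSum (A ∩ B) := by
    ext (x | x) <;> simp [and_comm]
  rw [pairsWithin, this, card_disjSum]
  omega

end Pairing

section Counting

lemma card_symmDiff_add_two_mul_card_inter {ι : Type*} [DecidableEq ι] (A B : Finset ι) :
    #(symmDiff A B) + 2 * #(A ∩ B) = #A + #B := by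
  have card_union : #(A ∪ B) = #(symmDiff A B) + #(A ∩ B) := calc
    #(A ∪ B) = #(symmDiff A B ∪ A ∩ B) := congrArg card (symmDiff_sup_inf A B).symm
    _ = #(symmDiff A B) + #(A ∩ B) := card_union_of_disjoint (disjoint_symmDiff_inf A B)
  rw [← card_union_add_card_inter, card_union]
  ring

lemma inter_symmDiff_sdiff_of_disjoint {ι : Type*} [DecidableEq ι] {P Q R : Finset ι}
    (hPQ : Disjoint P Q) (hRQ : R ⊆ Q) :
    (P ∪ R) ∩ (P ∪ Q \ R) = P ∧ symmDiff (P ∪ R) (P ∪ Q \ R) = Q ∧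
      (P ∪ R) \ (P ∪ Q \ R) = R := by
  rw [disjoint_left] at hPQ
  refine ⟨?_, ?_, ?_⟩ <;> ext x <;> grind [mem_symmDiff]

variable (ι : Type*) [Fintype ι] [DecidableEq ι]

/-- Triples `(P, Q, R)` of finite sets with `#P = j`, `#Q = k`, `Q` disjoint from `P` and `R ⊆ Q`.
They encode the pairs `(A, B)` with `A ∩ B = P`, `A ∆ B = Q` and `A \ B = R`. -/
def overlapTriples (j k : ℕ) : Finset (Σ _ : Finset ι, Σ _ : Finset ι, Finset ι) :=
  (powersetCard j univ).sigma fun P ↦ (powersetCard k Pᶜ).sigma fun Q ↦ Q.powerset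

variable {ι} in
lemma mem_overlapTriples {j k : ℕ} {P Q R : Finset ι} :
    ⟨P, Q, R⟩ ∈ overlapTriples ι j k ↔ #P = j ∧ Disjoint P Q ∧ #Q = k ∧ R ⊆ Q := by
  simp [overlapTriples, mem_powersetCard, subset_compl_iff_disjoint_left, and_assoc]

lemma card_overlapTriples (j k : ℕ) :
    #(overlapTriples ι j k) =
      (Fintype.card ι).choose j * ((Fintype.card ι - j).choose k * 2 ^ k) := by
  rw [overlapTriples, card_sigma, sum_const_nat, card_powersetCard, card_univ]
  intro P hP
  rw [card_sigma, sum_const_nat, card_powersetCard, card_compl, (mem_powersetCard.1 hP).2]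
  intro Q hQ
  rw [card_powerset, (mem_powersetCard.1 hQ).2]

lemma card_filter_card_add_card_and_card_inter (j k : ℕ) :
    #{p : Finset ι × Finset ι | #p.1 + #p.2 = 2 * j + k ∧ #(p.1 ∩ p.2) = j} =
      (Fintype.card ι).choose j * ((Fintype.card ι - j).choose k * 2 ^ k) := by
  rw [← card_overlapTriples]
  refine card_nbij' (fun p ↦ ⟨p.1 ∩ p.2, symmDiff p.1 p.2, p.1 \ p.2⟩)
    (fun t ↦ (t.1 ∪ t.2.2, t.1 ∪ (t.2.1 \ t.2.2))) ?_ ?_ ?_ ?_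
  · rintro ⟨A, B⟩ hp
    obtain ⟨card_add, card_inter⟩ : #A + #B = 2 * j + k ∧ #(A ∩ B) = j := by simpa using hp
    have card_symmDiff : #(symmDiff A B) = k := by
      have := card_symmDiff_add_two_mul_card_inter A B
      omega
    exact mem_overlapTriples.2
      ⟨card_inter, (disjoint_symmDiff_inf A B).symm, card_symmDiff, le_sup_left⟩
  · rintro ⟨P, Q, R⟩ ht
    obtain ⟨card_P, hPQ, card_Q, hRQ⟩ := mem_overlapTriples.1 ht
    obtain ⟨inter_eq, symmDiff_eq, -⟩ := inter_symmDiff_sdiff_of_disjoint hPQ hRQ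
    have := card_symmDiff_add_two_mul_card_inter (P ∪ R) (P ∪ Q \ R)
    rw [inter_eq, symmDiff_eq] at this
    exact (mem_filter_univ _).2 ⟨by simp only; omega, by rw [inter_eq, card_P]⟩
  · rintro ⟨A, B⟩ -
    refine Prod.ext ?_ ?_ <;> ext x <;> grind [mem_symmDiff]
  · rintro ⟨P, Q, R⟩ ht
    obtain ⟨-, hPQ, -, hRQ⟩ := mem_overlapTriples.1 ht
    obtain ⟨inter_eq, symmDiff_eq, sdiff_eq⟩ := inter_symmDiff_sdiff_of_disjoint hPQ hRQ
    simp only [inter_eq, symmDiff_eq, sdiff_eq]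

variable {α : Type*} [Fintype α] [DecidableEq α]

lemma IsPairing.card_filter_pairsWithin_eq {M : Perm α} (hM : IsPairing M) {m : ℕ}
    (hm : Fintype.card α = 2 * m) (j k : ℕ) :
    #{T : Finset α | #T = 2 * j + k ∧ pairsWithin M T = j} =
      m.choose j * ((m - j).choose k * 2 ^ k) := by
  obtain ⟨e, rfl⟩ := (isPairing_sumComm (Fin m)).exists_permCongr_eq hM (by simp [hm, two_mul])
  have card_pairs := card_filter_card_add_card_and_card_inter (Fin m) j k
  rw [Fintype.card_fin] at card_pairs
  rw [← card_pairs]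
  symm
  refine card_equiv (sumEquiv.symm.toEquiv.trans e.finsetCongr) fun p ↦ ?_
  simp [pairsWithin_permCongr, pairsWithin_sumComm_disjSum]

lemma card_filter_isPairing_pairsWithin_congr {T T' : Finset α} (h : #T = #T') (j : ℕ) :
    #{M : Perm α | IsPairing M ∧ pairsWithin M T = j} =
      #{M : Perm α | IsPairing M ∧ pairsWithin M T' = j} := by
  obtain ⟨g, rfl⟩ : ∃ g : Perm α, T.map g.toEmbedding = T' := by
    obtain ⟨g, hg⟩ := Set.powersetCard.isPretransitive.exists_smul_eq
      (⟨T, rfl⟩ : Set.powersetCard α #T) ⟨T', h.symm⟩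
    exact ⟨g, (map_eq_image ..).trans (congrArg Subtype.val hg)⟩
  refine card_equiv g.permCongr fun M ↦ ?_
  simp only [mem_filter_univ, isPairing_permCongr_iff, pairsWithin_permCongr]

lemma choose_mul_card_filter_isPairing_pairsWithin {m j k : ℕ}
    (hm : Fintype.card α = 2 * m) {T : Finset α} (hT : #T = 2 * j + k) :
    (2 * m).choose (2 * j + k) * #{M : Perm α | IsPairing M ∧ pairsWithin M T = j} =
      #{M : Perm α | IsPairing M} * (m.choose j * ((m - j).choose k * 2 ^ k)) := by
  rw [← hm, ← card_univ, ← card_powersetCard]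
  refine card_mul_eq_card_mul (fun T M ↦ pairsWithin M T = j) (fun T' hT' ↦ ?_) fun M hM ↦ ?_
  · rw [bipartiteAbove, filter_filter]
    exact card_filter_isPairing_pairsWithin_congr ((mem_powersetCard.1 hT').2.trans hT.symm) j
  · rw [← (mem_filter.1 hM).2.card_filter_pairsWithin_eq hm j k, bipartiteBelow]
    congr 1
    ext T
    simp

end Counting

section ConfigurationModel

variable {n d : ℕ}

lemma pairings_eq_filter_isPairing :
    pairings n d = ({M | IsPairing M} : Finset (Perm (Fin n × Fin d))) := by
  ext M
  rw [pairings, mem_filter_univ, mem_filter_univ]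
  exact ⟨fun h ↦ ⟨h.1, h.2⟩, fun h ↦ ⟨h.involutive, h.apply_ne⟩⟩

lemma pairings_nonempty (heven : Even (n * d)) : (pairings n d).Nonempty := by
  obtain ⟨m, hm⟩ := heven
  let e : Fin m ⊕ Fin m ≃ Fin n × Fin d := Fintype.equivOfCardEq (by simp [hm])
  rw [pairings_eq_filter_isPairing]
  exact ⟨e.permCongr (Equiv.sumComm _ _), by simpa using (isPairing_sumComm _).permCongr e⟩

lemma edgesWithin_eq_pairsWithin (M : Perm (Fin n × Fin d)) (S : Finset (Fin n)) :
    edgesWithin M S = pairsWithin M (S ×ˢ univ) := by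
  rw [edgesWithin, pairsWithin]
  congr 2
  ext x
  simp

lemma sum_Zcount (i j : ℕ) :
    ∑ M ∈ pairings n d, Zcount n d i j M =
      ∑ S ∈ powersetCard i univ, #{M ∈ pairings n d | edgesWithin M S = j} := by
  symm
  refine (sum_card_bipartiteAbove_eq_sum_card_bipartiteBelow
    (fun S M ↦ edgesWithin M S = j)).trans (sum_congr rfl fun M _ ↦ ?_)
  rw [bipartiteBelow, Zcount]
  congr 1
  ext S
  simp

lemma choose_mul_sum_Zcount {i j k m : ℕ} (hm : n * d = 2 * m) (hk : i * d = 2 * j + k) :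
    (2 * m).choose (2 * j + k) * ∑ M ∈ pairings n d, Zcount n d i j M =
      n.choose i * (#(pairings n d) * (m.choose j * ((m - j).choose k * 2 ^ k))) := by
  rw [sum_Zcount, mul_sum, sum_const_nat, card_powersetCard, card_fin]
  intro S hS
  have card_halfEdges : #(S ×ˢ (univ : Finset (Fin d))) = 2 * j + k := by
    rw [card_product, (mem_powersetCard.1 hS).2, card_fin, hk]
  simp only [edgesWithin_eq_pairsWithin, pairings_eq_filter_isPairing, filter_filter]
  exact choose_mul_card_filter_isPairing_pairsWithin (by simp [hm]) card_halfEdges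

lemma EZ_eq_choose {i j k m : ℕ} (hm : n * d = 2 * m) (hk : i * d = 2 * j + k) (hi : i ≤ n) :
    EZ n d i j =
      n.choose i * (m.choose j * ((m - j).choose k * 2 ^ k) / (2 * m).choose (2 * j + k)) := by
  have card_ne_zero : (#(pairings n d) : ℝ) ≠ 0 :=
    mod_cast (pairings_nonempty (hm ▸ even_two_mul m)).card_ne_zero
  have choose_ne_zero : ((2 * m).choose (2 * j + k) : ℝ) ≠ 0 := by
    rw [← hm, ← hk]
    exact mod_cast (Nat.choose_pos (Nat.mul_le_mul_right d hi)).ne'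
  have key : ((2 * m).choose (2 * j + k) : ℝ) * ∑ M ∈ pairings n d, (Zcount n d i j M : ℝ) =
      n.choose i * (#(pairings n d) * (m.choose j * ((m - j).choose k * 2 ^ k))) :=
    mod_cast choose_mul_sum_Zcount hm hk
  rw [EZ, div_eq_iff card_ne_zero, ← mul_right_inj' choose_ne_zero, key]
  field_simp

end ConfigurationModel

/-- Lemma: exact formula for `E[Z_{i,j}]` in the configuration model, for `1 ≤ i ≤ n` and
`0 ≤ j ≤ (d/2) i` (so that all factorial arguments are nonnegative integers). -/
theorem EZ_formula (n d i j : ℕ) (heven : Even (n * d))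
    (hi1 : 1 ≤ i) (hi2 : i ≤ n) (hj1 : 2 * j ≤ i * d) (hj2 : i * d ≤ n * d / 2 + j) :
    EZ n d i j =
      (n.choose i : ℝ) *
        ((((i * d).factorial : ℝ) * (((n - i) * d).factorial : ℝ) *
            ((n * d / 2).factorial : ℝ) * (2 : ℝ) ^ (i * d - 2 * j)) /
          (((i * d - 2 * j).factorial : ℝ) * (j.factorial : ℝ) *
            ((n * d / 2 + j - i * d).factorial : ℝ) * ((n * d).factorial : ℝ))) := by
  obtain ⟨m, hm⟩ := heven.two_dvd
  obtain ⟨k, hk⟩ := Nat.exists_eq_add_of_le hj1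
  obtain ⟨l, rfl⟩ : ∃ l, m = j + (k + l) := ⟨m - (j + k), by omega⟩
  have hcompl : (n - i) * d = k + 2 * l := by rw [Nat.sub_mul]; omega
  have hhalf : n * d / 2 = j + (k + l) := by omega
  have htotal : 2 * (j + (k + l)) = (2 * j + k) + (k + 2 * l) := by ring
  rw [EZ_eq_choose hm hk hi2, Nat.add_sub_cancel_left, hcompl, hhalf, hk, hm, htotal,
    Nat.add_sub_cancel_left, show j + (k + l) + j - (2 * j + k) = l by omega,
    Nat.cast_add_choose, Nat.cast_add_choose, Nat.cast_add_choose]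
  field_simp

end
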